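/- Let X be a compact metric space, g : X → X continuous, φ : X → ℝ continuous, K ⊆ X, and c̄ > 0. Suppose: (i) for every z ∈ K and every n ≥ 1 with gⁿ(z) ∈ K one has (1/n) S_n g(z) ≤ c̄; (ii) for every z ∈ X whose forward g-orbit visits K only finitely many times, limsup_{n→∞} (1/n) S_n g(z) ≤ 0. Then for every z ∈ X, liminf_{n→∞} (1/n) S_n g(z) ≤ c̄. -/

import Mathlib

open Filter

/-- If every return of points of `K` to `K` has Birkhoff average at most
`c̄`, and points whose orbit visits `K` only finitely often have asymptotic average at
most `0`, then every point has `liminf` Birkhoff average at most `c̄`. -/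
theorem liminf_birkhoff_average_le
    {X : Type*} [MetricSpace X] [CompactSpace X]
    (g : X → X) (hg : Continuous g) (φ : X → ℝ) (hφ : Continuous φ)
    (K : Set X) (c : ℝ) (hc : 0 < c)
    (hret : ∀ z ∈ K, ∀ n : ℕ, 1 ≤ n → g^[n] z ∈ K → birkhoffSum g φ n z / n ≤ c)
    (hfin : ∀ z : X, {n : ℕ | g^[n] z ∈ K}.Finite →
      limsup (fun n : ℕ => birkhoffSum g φ n z / n) atTop ≤ 0) :
    ∀ z : X, liminf (fun n : ℕ => birkhoffSum g φ n z / n) atTop ≤ c := by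
  intro z
  obtain ⟨C, hC⟩ : ∃ C : ℝ, ∀ x, |φ x| ≤ C := by
    obtain ⟨C, hC⟩ := isCompact_univ.exists_bound_of_continuousOn hφ.continuousOn
    exact ⟨C, fun x => hC x (Set.mem_univ x)⟩
  have hC0 : 0 ≤ C := (abs_nonneg _).trans (hC z)
  have hS : ∀ n : ℕ, |birkhoffSum g φ n z / n| ≤ C := by
    intro n
    have h1 : |birkhoffSum g φ n z| ≤ n * C := by
      unfold birkhoffSum
      refine (Finset.abs_sum_le_sum_abs _ _).trans ?_
      refine (Finset.sum_le_sum (fun i _ => hC (g^[i] z))).trans ?_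
      simp
    rw [abs_div, Nat.abs_cast]
    rcases Nat.eq_zero_or_pos n with rfl | hn
    · simpa using hC0
    · rw [div_le_iff₀ (by exact_mod_cast hn)]
      linarith
  have hbelow : IsBoundedUnder (· ≥ ·) atTop (fun n : ℕ => birkhoffSum g φ n z / n) :=
    isBoundedUnder_of ⟨-C, fun n => (abs_le.1 (hS n)).1⟩
  have habove : IsBoundedUnder (· ≤ ·) atTop (fun n : ℕ => birkhoffSum g φ n z / n) :=
    isBoundedUnder_of ⟨C, fun n => (abs_le.1 (hS n)).2⟩
  by_cases hf : {n : ℕ | g^[n] z ∈ K}.Finite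
  · exact ((liminf_le_limsup habove hbelow).trans (hfin z hf)).trans hc.le
  · have hinf : {n : ℕ | g^[n] z ∈ K}.Infinite := hf
    obtain ⟨m, hm⟩ := hinf.nonempty
    have hm' : g^[m] z ∈ K := hm
    refine le_of_forall_pos_le_add fun ε hε => ?_
    refine liminf_le_of_frequently_le ?_ hbelow
    rw [frequently_atTop]
    intro a
    obtain ⟨N, hN⟩ := exists_nat_gt (|birkhoffSum g φ m z| / ε)
    obtain ⟨n, hn, hlt⟩ := hinf.exists_gt (max a (max m N))
    have hn' : g^[n] z ∈ K := hn
    have ha : a < n := lt_of_le_of_lt (le_max_left _ _) hlt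
    have hmn : m < n := lt_of_le_of_lt ((le_max_left _ _).trans (le_max_right _ _)) hlt
    have hNn : N < n := lt_of_le_of_lt ((le_max_right _ _).trans (le_max_right _ _)) hlt
    refine ⟨n, ha.le, ?_⟩
    obtain ⟨k, rfl⟩ := Nat.exists_eq_add_of_lt hmn
    have hk := hret (g^[m] z) hm' (k + 1) (by omega) (by
      rw [← Function.iterate_add_apply, show k + 1 + m = m + k + 1 by omega]
      exact hn')
    rw [div_le_iff₀ (by positivity)] at hk
    have hsum : birkhoffSum g φ (m + k + 1) z
        = birkhoffSum g φ m z + birkhoffSum g φ (k + 1) (g^[m] z) := by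
      rw [add_assoc, birkhoffSum_add]
    rw [div_le_iff₀ (by positivity), hsum]
    rw [div_lt_iff₀ hε] at hN
    have hNr : (N : ℝ) < ((m + k + 1 : ℕ) : ℝ) := by exact_mod_cast hNn
    have h2 := mul_lt_mul_of_pos_right hNr hε
    have h3 := le_abs_self (birkhoffSum g φ m z)
    have h4 : 0 ≤ c * (m : ℝ) := by positivity
    push_cast at *
    nlinarith
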